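/- (Growth of the quartic interaction coefficients Ā and B̄) For all i, j, l, m ∈ ℕ, |∫₀^{π/2} (e_i'(x)/ω_i)·(e_j'(x)/ω_j)·e_l(x)·(e_m'(x)/ω_m)·sin³(x)/cos(x) dx| ≤ (8/π)·ω_l and |∫₀^{π/2} e_i(x)·e_j(x)·e_l(x)·(e_m'(x)/ω_m)·sin³(x)/cos(x) dx| ≤ (8/π)·ω_l; i.e. the Fourier constants Ā_{ijl}^{(m)} and B̄_{ijl}^{(m)} are O(ω_l). -/

import Mathlib

open Real MeasureTheory

/-- The AdS linearized eigenvalue `ω_j = 2j + 3`. -/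
noncomputable def ω (j : ℕ) : ℝ := 2 * j + 3

/-- The AdS linearized eigenfunction
`e_j(x) = (2/√π)·(ω_j² − 1)^(−1/2)·(ω_j·sin(ω_j x)/tan x − cos(ω_j x))`. -/
noncomputable def e (j : ℕ) (x : ℝ) : ℝ :=
  (2 / Real.sqrt Real.pi) * (Real.sqrt (ω j ^ 2 - 1))⁻¹ *
    (ω j * Real.sin (ω j * x) / Real.tan x - Real.cos (ω j * x))

/-- The derivative of the AdS linearized eigenfunction,
`e_j'(x) = (2/√π)·ω_j·(ω_j² − 1)^(−1/2)·(ω_j·cos(ω_j x)/tan x − sin(ω_j x)/tan² x)`. -/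
noncomputable def e' (j : ℕ) (x : ℝ) : ℝ :=
  (2 / Real.sqrt Real.pi) * ω j * (Real.sqrt (ω j ^ 2 - 1))⁻¹ *
    (ω j * Real.cos (ω j * x) / Real.tan x - Real.sin (ω j * x) / Real.tan x ^ 2)


theorem aux_sin_nat (n : ℕ) (x : ℝ) : |sin (n * x)| ≤ n * |sin x| := by
  induction n with
  | zero => simp
  | succ k ih =>
    push_cast
    rw [add_mul, one_mul, sin_add]
    calc |sin (k * x) * cos x + cos (k * x) * sin x|
        ≤ |sin (k * x) * cos x| + |cos (k * x) * sin x| := abs_add_le _ _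
      _ = |sin (k * x)| * |cos x| + |cos (k * x)| * |sin x| := by rw [abs_mul, abs_mul]
      _ ≤ |sin (k * x)| * 1 + 1 * |sin x| := by
          gcongr
          · exact abs_cos_le_one _
          · exact abs_cos_le_one _
      _ ≤ (k + 1) * |sin x| := by linarith

theorem aux_three (j : ℕ) : 3 ≤ ω j := by
  unfold ω; have : (0:ℝ) ≤ j := Nat.cast_nonneg j; linarith

theorem aux_sin (j : ℕ) (x : ℝ) : |sin (ω j * x)| ≤ ω j * |sin x| := by
  have := aux_sin_nat (2 * j + 3) x
  push_cast at this
  exact this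

/-- the basic kernel -/
noncomputable def gk (j : ℕ) (x : ℝ) : ℝ :=
  ω j * cos (ω j * x) - sin (ω j * x) * (cos x / sin x)

theorem aux_scot (j : ℕ) {x : ℝ} (hx : x ∈ Set.Ioo 0 (π / 2)) :
    |sin (ω j * x) * (cos x / sin x)| ≤ ω j := by
  have hs : 0 < sin x := sin_pos_of_pos_of_lt_pi hx.1 (by linarith [hx.2, pi_pos])
  have hc : 0 < cos x := cos_pos_of_mem_Ioo ⟨by linarith [hx.1, pi_pos], hx.2⟩
  have h1 := aux_sin j x
  have h3 := aux_three j
  rw [abs_of_pos hs] at h1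
  rw [abs_mul, abs_of_pos (div_pos hc hs), ← mul_div_assoc, div_le_iff₀ hs]
  calc |sin (ω j * x)| * cos x ≤ |sin (ω j * x)| * 1 := by
        gcongr; exact cos_le_one x
    _ ≤ _ := by linarith

theorem aux_gk_sq (j : ℕ) {x : ℝ} (hx : x ∈ Set.Ioo 0 (π / 2)) :
    gk j x ^ 2 ≤ 2 * ω j ^ 2 := by
  have hs : 0 < sin x := sin_pos_of_pos_of_lt_pi hx.1 (by linarith [hx.2, pi_pos])
  have hc : 0 < cos x := cos_pos_of_mem_Ioo ⟨by linarith [hx.1, pi_pos], hx.2⟩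
  have h3 := aux_three j
  have hscot := aux_scot j hx
  unfold gk
  by_cases h : 1 ≤ ω j * sin x
  · have hcot : (cos x / sin x) ^ 2 ≤ ω j ^ 2 := by
      rw [div_pow, div_le_iff₀ (by positivity)]
      have := sin_sq_add_cos_sq x
      nlinarith
    have hp := sin_sq_add_cos_sq (ω j * x)
    set t := cos x / sin x
    set S := sin (ω j * x)
    set C := cos (ω j * x)
    have : (ω j * C - S * t) ^ 2 = (ω j ^ 2 + t ^ 2) * (S ^ 2 + C ^ 2) - (ω j * S + C * t) ^ 2 := by
      ring
    rw [this, hp]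
    nlinarith [sq_nonneg (ω j * S + C * t)]
  · push Not at h
    have hj := mul_le_sin hx.1.le hx.2.le
    have hlt : ω j * x < π / 2 := by
      have h5 : ω j * (2 / π * x) < 1 := lt_of_le_of_lt (by gcongr) h
      have h6 : ω j * (2 / π * x) = (ω j * x) / (π / 2) := by field_simp
      rw [h6, div_lt_one (by positivity)] at h5
      exact h5
    have hpos : 0 < ω j * x := mul_pos (by linarith) hx.1
    have hS : 0 ≤ sin (ω j * x) := sin_nonneg_of_nonneg_of_le_pi hpos.le (by linarith [pi_pos])
    have hC : 0 ≤ cos (ω j * x) := cos_nonneg_of_mem_Icc ⟨by linarith, hlt.le⟩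
    have hC1 := cos_le_one (ω j * x)
    have hA : 0 ≤ sin (ω j * x) * (cos x / sin x) := by positivity
    have hB := (abs_le.1 hscot).2
    have hD : 0 ≤ ω j * cos (ω j * x) := by positivity
    have hE : ω j * cos (ω j * x) ≤ ω j := by nlinarith
    have : |ω j * cos (ω j * x) - sin (ω j * x) * (cos x / sin x)| ≤ |ω j| := by
      rw [abs_of_pos (by linarith : 0 < ω j)]
      rw [abs_le]; constructor <;> linarith
    have := sq_le_sq.2 this
    nlinarith

theorem aux_meas (j : ℕ) : Measurable (gk j) := by
  unfold gk; fun_prop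

theorem aux_int (j : ℕ) : IntervalIntegrable (fun x => gk j x ^ 2) volume 0 (π / 2) := by
  rw [intervalIntegrable_iff_integrableOn_Ioo_of_le (by positivity)]
  refine Measure.integrableOn_of_bounded (M := 2 * ω j ^ 2) (by simp)
    ((aux_meas j).pow_const 2).aestronglyMeasurable ?_
  filter_upwards [ae_restrict_mem measurableSet_Ioo] with x hx
  rw [norm_eq_abs, abs_of_nonneg (sq_nonneg _)]
  exact aux_gk_sq j hx

theorem aux_pi2 (j : ℕ) : cos (ω j * (π / 2)) = 0 ∧ sin (2 * (ω j * (π / 2))) = 0 := by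
  have h : cos (ω j * (π / 2)) = 0 := by
    rw [cos_eq_zero_iff]
    refine ⟨(j : ℤ) + 1, ?_⟩
    unfold ω; push_cast; ring
  exact ⟨h, by rw [sin_two_mul, h, mul_zero]⟩

theorem aux_integral (j : ℕ) : ∫ x in (0:ℝ)..(π / 2), gk j x ^ 2 = (ω j ^ 2 - 1) * π / 4 := by
  have h3 := aux_three j
  have hne : ω j ≠ 0 := by linarith
  let R : ℝ → ℝ := fun x => (ω j ^ 2 - 1) / 2 * x + (ω j ^ 2 + 1) / (4 * ω j) * sin (2 * (ω j * x))
  let F : ℝ → ℝ := fun x => R x - sin (ω j * x) ^ 2 * (cos x / sin x)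
  have hRc : Continuous R := by fun_prop
  have := intervalIntegral.integral_eq_sub_of_hasDerivAt_of_tendsto (f := F)
    (f' := fun x => gk j x ^ 2) (a := 0) (b := π / 2) (fa := 0) (fb := (ω j ^ 2 - 1) * π / 4)
    (by positivity) ?_ (aux_int j) ?_ ?_
  · rw [this, sub_zero]
  · intro x hx
    have hs : sin x ≠ 0 := (sin_pos_of_pos_of_lt_pi hx.1 (by linarith [hx.2, pi_pos])).ne'
    have hl : HasDerivAt (fun x => ω j * x) (ω j) x := by
      simpa using (hasDerivAt_id x).const_mul (ω j)
    have hR : HasDerivAt R ((ω j ^ 2 - 1) / 2 * 1 + (ω j ^ 2 + 1) / (4 * ω j) *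
        (cos (2 * (ω j * x)) * (2 * ω j))) x :=
      ((hasDerivAt_id x).const_mul _).add (((hl.const_mul 2).sin).const_mul _)
    have hq := (hl.sin.pow 2).mul ((hasDerivAt_cos x).div (hasDerivAt_sin x) hs)
    refine (hR.sub hq).congr_deriv ?_
    unfold gk
    rw [cos_two_mul]
    have e1 : cos x ^ 2 = 1 - sin x ^ 2 := by linarith [sin_sq_add_cos_sq x]
    have e2 : cos (ω j * x) ^ 2 = 1 - sin (ω j * x) ^ 2 := by
      linarith [sin_sq_add_cos_sq (ω j * x)]
    simp only [Pi.pow_apply, Pi.div_apply]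
    field_simp
    ring_nf
    simp only [e1, e2]
    ring
  · have h1 : Filter.Tendsto R (nhdsWithin 0 (Set.Ioi 0)) (nhds 0) := by
      have := hRc.tendsto 0
      have h0 : R 0 = 0 := by simp [R]
      rw [h0] at this
      exact this.mono_left nhdsWithin_le_nhds
    have h2 : Filter.Tendsto (fun x => sin (ω j * x) ^ 2 * (cos x / sin x))
        (nhdsWithin 0 (Set.Ioi 0)) (nhds 0) := by
      have hb : Filter.Tendsto (fun x => |sin (ω j * x)| * ω j) (nhdsWithin 0 (Set.Ioi 0))
          (nhds 0) := by
        have hcont : Continuous (fun x => |sin (ω j * x)| * ω j) := by fun_prop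
        have := hcont.tendsto 0
        simp only [mul_zero, sin_zero, abs_zero, zero_mul] at this
        exact this.mono_left nhdsWithin_le_nhds
      refine squeeze_zero_norm' ?_ hb
      filter_upwards [Ioo_mem_nhdsGT (by positivity : (0:ℝ) < π / 2)] with x hx
      rw [norm_eq_abs, pow_two, mul_assoc, abs_mul]
      exact mul_le_mul_of_nonneg_left (aux_scot j hx) (abs_nonneg _)
    simpa using h1.sub h2
  · have hF : ContinuousAt F (π / 2) := by
      refine hRc.continuousAt.sub (ContinuousAt.mul (by fun_prop) ?_)
      exact ContinuousAt.div (by fun_prop) (by fun_prop) (by simp)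
    have hv : F (π / 2) = (ω j ^ 2 - 1) * π / 4 := by
      simp only [F, R, (aux_pi2 j).2, cos_pi_div_two]; ring
    have := hF.tendsto
    rw [hv] at this
    exact this.mono_left nhdsWithin_le_nhds

noncomputable def cc (j : ℕ) : ℝ := (2 / √π) * (√(ω j ^ 2 - 1))⁻¹

theorem aux_cc (j : ℕ) : 0 ≤ cc j ∧ cc j ^ 2 * ((ω j ^ 2 - 1) * π / 4) = 1 := by
  have h3 := aux_three j
  have h : 0 < ω j ^ 2 - 1 := by nlinarith
  refine ⟨by unfold cc; positivity, ?_⟩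
  unfold cc
  rw [mul_pow, div_pow, inv_pow, sq_sqrt h.le, sq_sqrt pi_pos.le]
  field_simp
  norm_num

theorem aux_norm (j : ℕ) : ∫ x in (0:ℝ)..(π / 2), (cc j * gk j x) ^ 2 = 1 := by
  simp_rw [mul_pow]
  rw [intervalIntegral.integral_const_mul, aux_integral, (aux_cc j).2]

theorem aux_norm_int (j : ℕ) :
    IntervalIntegrable (fun x => (cc j * gk j x) ^ 2) volume 0 (π / 2) := by
  simp_rw [mul_pow]
  exact (aux_int j).const_mul _

/-- pointwise estimate for the last two factors -/
theorem aux_K (l m : ℕ) {x : ℝ} (hx : x ∈ Set.Ioo 0 (π / 2)) :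
    |e l x| * |cc m * gk m x * cos x ^ 2| ≤ 8 / π * ω l := by
  have hl := aux_three l
  have hm := aux_three m
  have hL : 0 < ω l ^ 2 - 1 := by nlinarith
  have hM : 0 < ω m ^ 2 - 1 := by nlinarith
  have hg : |gk m x| ≤ 3 / 2 * √(ω m ^ 2 - 1) := by
    apply abs_le_of_sq_le_sq _ (by positivity)
    rw [mul_pow, sq_sqrt hM.le]
    have := aux_gk_sq m hx
    nlinarith
  have h1 : |cc m * gk m x * cos x ^ 2| ≤ 3 / √π := by
    rw [abs_mul, abs_mul, abs_of_nonneg (aux_cc m).1, abs_of_nonneg (sq_nonneg (cos x))]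
    calc cc m * |gk m x| * cos x ^ 2 ≤ cc m * (3 / 2 * √(ω m ^ 2 - 1)) * 1 := by
          have := (aux_cc m).1
          gcongr
          exact cos_sq_le_one x
      _ = 3 / √π := by unfold cc; field_simp
  have h2 : |e l x| ≤ 8 / 3 * ω l / √π := by
    have hE : e l x = cc l * (ω l * (sin (ω l * x) * (cos x / sin x)) - cos (ω l * x)) := by
      unfold e cc
      rw [tan_eq_sin_div_cos, div_div_eq_mul_div]; ring
    rw [hE, abs_mul, abs_of_nonneg (aux_cc l).1]
    have hb : |ω l * (sin (ω l * x) * (cos x / sin x)) - cos (ω l * x)| ≤ ω l ^ 2 + 1 := by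
      refine (abs_sub _ _).trans ?_
      rw [abs_mul, abs_of_pos (by linarith : 0 < ω l)]
      have := aux_scot l hx
      have := abs_cos_le_one (ω l * x)
      nlinarith
    have hb2 : ω l ^ 2 + 1 ≤ 4 / 3 * ω l * √(ω l ^ 2 - 1) := by
      apply le_of_sq_le_sq _ (by positivity)
      rw [mul_pow, sq_sqrt hL.le]
      have : 9 ≤ ω l ^ 2 := by nlinarith
      nlinarith
    calc _ ≤ cc l * (4 / 3 * ω l * √(ω l ^ 2 - 1)) :=
          mul_le_mul_of_nonneg_left (hb.trans hb2) (aux_cc l).1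
      _ = _ := by unfold cc; field_simp; norm_num
  calc _ ≤ (8 / 3 * ω l / √π) * (3 / √π) := by gcongr
    _ = 8 * ω l / (√π * √π) := by field_simp
    _ = _ := by rw [mul_self_sqrt pi_pos.le]; ring

theorem aux_e' (j : ℕ) {x : ℝ} (hx : x ∈ Set.Ioo 0 (π / 2)) :
    e' j x / ω j = cc j * gk j x * (cos x / sin x) := by
  have h3 := aux_three j
  have hne : ω j ≠ 0 := by linarith
  have hs : sin x ≠ 0 := (sin_pos_of_pos_of_lt_pi hx.1 (by linarith [hx.2, pi_pos])).ne'
  have hc : cos x ≠ 0 := (cos_pos_of_mem_Ioo ⟨by linarith [hx.1, pi_pos], hx.2⟩).ne'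
  have : e' j x = cc j * ω j * (ω j * cos (ω j * x) / tan x - sin (ω j * x) / tan x ^ 2) := by
    unfold e' cc; ring
  rw [this, tan_eq_sin_div_cos]
  unfold gk
  field_simp

theorem aux_e (j : ℕ) {x : ℝ} (hx : x ∈ Set.Ioo 0 (π / 2)) :
    |e j x| = |cc j * gk j (π / 2 - x)| * (cos x / sin x) := by
  have hs : 0 < sin x := sin_pos_of_pos_of_lt_pi hx.1 (by linarith [hx.2, pi_pos])
  have hc : 0 < cos x := cos_pos_of_mem_Ioo ⟨by linarith [hx.1, pi_pos], hx.2⟩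
  have hE : e j x = cc j * (ω j * sin (ω j * x) - cos (ω j * x) * (sin x / cos x))
      * (cos x / sin x) := by
    have : e j x = cc j * (ω j * sin (ω j * x) / tan x - cos (ω j * x)) := rfl
    rw [this, tan_eq_sin_div_cos]
    field_simp
  have hS : |sin (ω j * (π / 2))| = 1 := by
    have := sin_sq_add_cos_sq (ω j * (π / 2))
    rw [(aux_pi2 j).1] at this
    rw [← sq_eq_sq₀ (abs_nonneg _) zero_le_one, sq_abs]; linarith
  have hG : gk j (π / 2 - x) = sin (ω j * (π / 2)) *
      (ω j * sin (ω j * x) - cos (ω j * x) * (sin x / cos x)) := by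
    unfold gk
    rw [mul_sub, cos_sub, sin_sub, (aux_pi2 j).1, cos_pi_div_two_sub, sin_pi_div_two_sub]
    ring
  rw [hE, hG, abs_mul, abs_of_pos (div_pos hc hs), abs_mul, abs_mul, abs_mul, hS, one_mul]

theorem aux_main (F P Q : ℝ → ℝ) (K : ℝ)
    (hP : IntervalIntegrable (fun x => P x ^ 2) volume 0 (π / 2))
    (hQ : IntervalIntegrable (fun x => Q x ^ 2) volume 0 (π / 2))
    (hP1 : ∫ x in (0:ℝ)..(π / 2), P x ^ 2 = 1) (hQ1 : ∫ x in (0:ℝ)..(π / 2), Q x ^ 2 = 1)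
    (hF : ∀ x ∈ Set.Ioo (0:ℝ) (π / 2), |F x| ≤ |P x| * |Q x| * K) (hK : 0 ≤ K) :
    |∫ x in Set.Ioo (0:ℝ) (π / 2), F x| ≤ K := by
  have hpi : (0:ℝ) ≤ π / 2 := by positivity
  have hint := (hP.add hQ).const_mul (K / 2)
  have h := norm_integral_le_of_norm_le (f := F)
    ((intervalIntegrable_iff_integrableOn_Ioo_of_le hpi).1 hint) (by
      filter_upwards [ae_restrict_mem measurableSet_Ioo] with x hx
      refine (hF x hx).trans ?_
      have h2 : |P x| * |Q x| ≤ (P x ^ 2 + Q x ^ 2) / 2 := by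
        rw [← sq_abs (P x), ← sq_abs (Q x)]
        nlinarith [sq_nonneg (|P x| - |Q x|)]
      have := mul_le_mul_of_nonneg_right h2 hK
      calc _ ≤ _ := this
        _ = _ := by ring)
  rw [← integral_Ioc_eq_integral_Ioo (f := fun x => K / 2 * _), ← intervalIntegral.integral_of_le hpi,
    intervalIntegral.integral_const_mul] at h
  have hadd := intervalIntegral.integral_add hP hQ
  rw [hP1, hQ1] at hadd
  change _ ≤ K / 2 * ∫ x in (0:ℝ)..(π / 2), (P x ^ 2 + Q x ^ 2) at h
  rw [hadd] at h
  rw [norm_eq_abs] at h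
  linarith

/-- Growth of the quartic interaction coefficients `Ā` and `B̄`: for all `i, j, l, m ∈ ℕ`,
`|Ā_{ijl}^{(m)}| ≤ (8/π)·ω_l` and `|B̄_{ijl}^{(m)}| ≤ (8/π)·ω_l`, i.e. these Fourier
constants are `O(ω_l)`. -/
theorem quartic_interaction_coefficients_Abar_Bbar_growth (i j l m : ℕ) :
    |∫ x in Set.Ioo (0 : ℝ) (Real.pi / 2),
        (e' i x / ω i) * (e' j x / ω j) * e l x * (e' m x / ω m) *
          (Real.sin x ^ 3 / Real.cos x)| ≤ (8 / Real.pi) * ω l ∧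
    |∫ x in Set.Ioo (0 : ℝ) (Real.pi / 2),
        e i x * e j x * e l x * (e' m x / ω m) *
          (Real.sin x ^ 3 / Real.cos x)| ≤ (8 / Real.pi) * ω l := by
  have h3 := aux_three l
  have hK : 0 ≤ 8 / π * ω l := by positivity
  constructor
  · refine aux_main _ (fun x => cc i * gk i x) (fun x => cc j * gk j x) _ (aux_norm_int i)
      (aux_norm_int j) (aux_norm i) (aux_norm j) ?_ hK
    intro x hx
    have hs : sin x ≠ 0 := (sin_pos_of_pos_of_lt_pi hx.1 (by linarith [hx.2, pi_pos])).ne'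
    have hc : cos x ≠ 0 := (cos_pos_of_mem_Ioo ⟨by linarith [hx.1, pi_pos], hx.2⟩).ne'
    rw [aux_e' i hx, aux_e' j hx, aux_e' m hx]
    have : cc i * gk i x * (cos x / sin x) * (cc j * gk j x * (cos x / sin x)) * e l x *
        (cc m * gk m x * (cos x / sin x)) * (sin x ^ 3 / cos x) =
        (cc i * gk i x) * (cc j * gk j x) * (e l x * (cc m * gk m x * cos x ^ 2)) := by
      field_simp
    rw [this, abs_mul, abs_mul (cc i * gk i x), abs_mul (e l x)]
    exact mul_le_mul_of_nonneg_left (aux_K l m hx) (by positivity)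
  · have hI : ∀ k : ℕ, IntervalIntegrable (fun x => (cc k * gk k (π / 2 - x)) ^ 2) volume 0
        (π / 2) := by
      intro k
      simpa using ((aux_norm_int k).comp_sub_left (π / 2)).symm
    have hN : ∀ k : ℕ, ∫ x in (0:ℝ)..(π / 2), (cc k * gk k (π / 2 - x)) ^ 2 = 1 := by
      intro k
      have := intervalIntegral.integral_comp_sub_left (a := 0) (b := π / 2)
        (fun x => (cc k * gk k x) ^ 2) (π / 2)
      rw [this]
      simpa using aux_norm k
    refine aux_main _ (fun x => cc i * gk i (π / 2 - x)) (fun x => cc j * gk j (π / 2 - x)) _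
      (hI i) (hI j) (hN i) (hN j) ?_ hK
    intro x hx
    have hs : 0 < sin x := sin_pos_of_pos_of_lt_pi hx.1 (by linarith [hx.2, pi_pos])
    have hc : 0 < cos x := cos_pos_of_mem_Ioo ⟨by linarith [hx.1, pi_pos], hx.2⟩
    rw [aux_e' m hx]
    have : e i x * e j x * e l x *
        (cc m * gk m x * (cos x / sin x)) * (sin x ^ 3 / cos x) =
        (e i x * e j x) * (sin x / cos x) ^ 2 * (e l x * (cc m * gk m x * cos x ^ 2)) := by
      field_simp
    rw [this, abs_mul, abs_mul (e i x * e j x), abs_mul (e i x), abs_mul (e l x), aux_e i hx,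
      aux_e j hx, abs_of_nonneg (sq_nonneg (sin x / cos x))]
    have h2 : |cc i * gk i (π / 2 - x)| * (cos x / sin x) *
        (|cc j * gk j (π / 2 - x)| * (cos x / sin x)) * (sin x / cos x) ^ 2 =
        |cc i * gk i (π / 2 - x)| * |cc j * gk j (π / 2 - x)| := by
      field_simp
    rw [h2]
    exact mul_le_mul_of_nonneg_left (aux_K l m hx) (by positivity)
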